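/- arXiv:2201.09002 — 2 statements merged into one kernel-verified Lean document; each statement's English description precedes it below -/
import Mathlib

section
/- Let ℓ be an odd prime and ε a non-square unit of ℤ/ℓℤ. If H is a subgroup of GL₂(ℤ/ℓℤ) contained in the normalizer C_ns⁺(ℓ) of the nonsplit Cartan subgroup, and every element of H has 1 as an eigenvalue (i.e., 1 is a root of its characteristic polynomial over ℤ/ℓℤ), then H has at most 2 elements. -/
open Matrix

/-- The nonsplit Cartan subgroup `C_ns(ℓ)` of `GL₂(ℤ/ℓℤ)`, as a set: all matrices
`[[a, εb], [b, a]]` with `(a, b) ≠ (0, 0)`. -/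
def Cns (ℓ : ℕ) (ε : ZMod ℓ) : Set (GL (Fin 2) (ZMod ℓ)) :=
  {g | ∃ a b : ZMod ℓ, ¬(a = 0 ∧ b = 0) ∧
    (g : Matrix (Fin 2) (Fin 2) (ZMod ℓ)) = !![a, ε * b; b, a]}

theorem key_aux (ℓ : ℕ) [Fact ℓ.Prime] (hodd : Odd ℓ) (ε : ZMod ℓ)
    (hsq : ¬ IsSquare ε) (hε : ε ≠ 0)
    (Hc : Subgroup (GL (Fin 2) (ZMod ℓ)))
    (hHc : (Hc : Set (GL (Fin 2) (ZMod ℓ))) = Cns ℓ ε)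
    (g : GL (Fin 2) (ZMod ℓ))
    (hg : g ∈ Subgroup.normalizer (Hc : Set (GL (Fin 2) (ZMod ℓ))))
    (heig : ((g : Matrix (Fin 2) (Fin 2) (ZMod ℓ)).charpoly).IsRoot 1) :
    g = 1 ∨ (g : Matrix (Fin 2) (Fin 2) (ZMod ℓ)) * !![0, ε; 1, 0]
      = - (!![0, ε; 1, 0] * (g : Matrix (Fin 2) (Fin 2) (ZMod ℓ))) := by
  have h2 : (2 : ZMod ℓ) ≠ 0 := by
    intro h
    have h3 : ((2 : ℕ) : ZMod ℓ) = 0 := by exact_mod_cast h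
    rw [ZMod.natCast_eq_zero_iff] at h3
    have := (Nat.prime_dvd_prime_iff_eq (Fact.out : ℓ.Prime) Nat.prime_two).1 h3
    subst this
    exact absurd hodd (by decide)
  have hdet : (!![0, ε; 1, 0] : Matrix (Fin 2) (Fin 2) (ZMod ℓ)).det ≠ 0 := by
    simp [Matrix.det_fin_two, hε]
  let J : GL (Fin 2) (ZMod ℓ) := Matrix.GeneralLinearGroup.mkOfDetNeZero _ hdet
  have hJv : (J : Matrix (Fin 2) (Fin 2) (ZMod ℓ)) = !![0, ε; 1, 0] := rfl
  have hJ : J ∈ (Hc : Set (GL (Fin 2) (ZMod ℓ))) := by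
    rw [hHc]
    exact ⟨0, 1, by simp, by rw [hJv]; simp⟩
  have hM := (Subgroup.mem_normalizer_iff.1 hg J).1 hJ
  have hM' : g * J * g⁻¹ ∈ Cns ℓ ε := hHc ▸ hM
  obtain ⟨a, b, -, hab⟩ := hM'
  have htr : Matrix.trace ((g * J * g⁻¹ : GL (Fin 2) (ZMod ℓ)) : Matrix (Fin 2) (Fin 2) (ZMod ℓ)) = 0 := by
    have := Matrix.trace_units_conj g (J : Matrix (Fin 2) (Fin 2) (ZMod ℓ))
    push_cast at this ⊢
    rw [this, hJv]; simp [Matrix.trace_fin_two]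
  have hdt : Matrix.det ((g * J * g⁻¹ : GL (Fin 2) (ZMod ℓ)) : Matrix (Fin 2) (Fin 2) (ZMod ℓ)) = -ε := by
    have := Matrix.det_units_conj g (J : Matrix (Fin 2) (Fin 2) (ZMod ℓ))
    push_cast at this ⊢
    rw [this, hJv]; simp [Matrix.det_fin_two]
  rw [hab] at htr hdt
  have ha : a = 0 := by
    simp [Matrix.trace_fin_two] at htr
    have : 2 * a = 0 := by linear_combination htr
    exact (mul_eq_zero.1 this).resolve_left h2
  subst ha
  have hb : b = 1 ∨ b = -1 := by
    simp [Matrix.det_fin_two] at hdt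
    have : ε * ((b - 1) * (b + 1)) = 0 := by linear_combination hdt
    rcases mul_eq_zero.1 ((mul_eq_zero.1 this).resolve_left hε) with h | h
    · left; linear_combination h
    · right; linear_combination h
  have hcomm : (g : Matrix (Fin 2) (Fin 2) (ZMod ℓ)) * !![0, ε; 1, 0]
      = !![0, ε * b; b, 0] * (g : Matrix (Fin 2) (Fin 2) (ZMod ℓ)) := by
    rw [← hab, ← hJv, ← Units.val_mul, ← Units.val_mul]
    congr 1
    group
  rcases hb with rfl | rfl
  · left
    have e := heig
    rw [Polynomial.IsRoot.def, Matrix.eval_charpoly, Matrix.det_fin_two] at e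
    simp at e
    have c00 := congrFun (congrFun hcomm 0) 0
    have c10 := congrFun (congrFun hcomm 1) 0
    simp [Matrix.mul_apply, Fin.sum_univ_two] at c00 c10
    have e' : (1 - g 0 0) ^ 2 = ε * (g 1 0) ^ 2 := by
      rw [c00, c10] at e
      linear_combination e
    have hr : g 1 0 = 0 := by
      by_contra hr
      apply hsq
      refine ⟨(1 - g 0 0) / g 1 0, ?_⟩
      field_simp
      linear_combination -e'
    rw [hr] at e' c00
    have hp : g 0 0 = 1 := by
      have : (1 - g 0 0) ^ 2 = 0 := by rw [e']; ring
      have := pow_eq_zero_iff (two_ne_zero) |>.1 this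
      linear_combination -this
    apply Units.ext
    ext i j
    fin_cases i <;> fin_cases j <;> simp [hr, hp, c00, c10]
  · right
    rw [hcomm, ← neg_mul]
    congr 1
    ext i j
    fin_cases i <;> fin_cases j <;> simp

theorem stmt_9 (ℓ : ℕ) [Fact ℓ.Prime] (hodd : Odd ℓ) (ε : ZMod ℓ)
    (hsq : ¬ IsSquare ε) (hε : ε ≠ 0)
    (Hc : Subgroup (GL (Fin 2) (ZMod ℓ)))
    (hHc : (Hc : Set (GL (Fin 2) (ZMod ℓ))) = Cns ℓ ε)
    (H : Subgroup (GL (Fin 2) (ZMod ℓ))) (hle : H ≤ Subgroup.normalizer (Hc : Set (GL (Fin 2) (ZMod ℓ))))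
    (heig : ∀ g : GL (Fin 2) (ZMod ℓ), g ∈ H →
      ((g : Matrix (Fin 2) (Fin 2) (ZMod ℓ)).charpoly).IsRoot 1) :
    Nat.card H ≤ 2 := by
  have key := fun g (hg : g ∈ H) => key_aux ℓ hodd ε hsq hε Hc hHc g (hle hg) (heig g hg)
  have h2 : (2 : ZMod ℓ) ≠ 0 := by
    intro h
    have h3 : ((2 : ℕ) : ZMod ℓ) = 0 := by exact_mod_cast h
    rw [ZMod.natCast_eq_zero_iff] at h3
    have := (Nat.prime_dvd_prime_iff_eq (Fact.out : ℓ.Prime) Nat.prime_two).1 h3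
    subst this
    exact absurd hodd (by decide)
  have anti : ∀ g ∈ H, ∀ h ∈ H, g ≠ 1 → h ≠ 1 → g * h = 1 := by
    intro g hg h hh hg1 hh1
    have kg := (key g hg).resolve_left hg1
    have kh := (key h hh).resolve_left hh1
    rcases key (g * h) (H.mul_mem hg hh) with k | k
    · exact k
    · exfalso
      have hc : (g : Matrix (Fin 2) (Fin 2) (ZMod ℓ)) * h * !![0, ε; 1, 0]
          = !![0, ε; 1, 0] * (g * h) := by
        rw [mul_assoc, kh, mul_neg, ← mul_assoc, kg, neg_mul, neg_neg, mul_assoc]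
      rw [Units.val_mul, hc] at k
      have z : (2 : ZMod ℓ) • (!![0, ε; 1, 0] * ((g : Matrix (Fin 2) (Fin 2) (ZMod ℓ)) * h)) = 0 := by
        rw [two_smul]
        nth_rewrite 1 [k]
        exact neg_add_cancel _
      have z' := (smul_eq_zero.1 z).resolve_left h2
      have d := congrArg Matrix.det z'
      rw [Matrix.det_mul, Matrix.det_mul] at d
      have dg : (g : Matrix (Fin 2) (Fin 2) (ZMod ℓ)).det ≠ 0 := g.det_ne_zero
      have dh : (h : Matrix (Fin 2) (Fin 2) (ZMod ℓ)).det ≠ 0 := h.det_ne_zero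
      simp [Matrix.det_fin_two_of, hε, dg, dh] at d
  by_cases hall : ∀ g ∈ H, g = 1
  · have : H = ⊥ := (Subgroup.eq_bot_iff_forall H).2 hall
    subst this
    simp
  · push Not at hall
    obtain ⟨g, hg, hg1⟩ := hall
    have hsub : (H : Set (GL (Fin 2) (ZMod ℓ))) ⊆ {1, g} := by
      intro h hh
      by_cases hh1 : h = 1
      · simp [hh1]
      · right
        exact mul_left_cancel ((anti g hg h hh hg1 hh1).trans (anti g hg g hg hg1 hg1).symm)
    calc Nat.card H = (H : Set (GL (Fin 2) (ZMod ℓ))).ncard := rfl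
      _ ≤ ({1, g} : Set (GL (Fin 2) (ZMod ℓ))).ncard := Set.ncard_le_ncard hsub (Set.toFinite _)
      _ ≤ 2 := (Set.ncard_insert_le _ _).trans (by rw [Set.ncard_singleton])
end

section
/- Let ℓ be a prime with ℓ > 13, let ε be a non-square unit of ℤ/ℓℤ, let e ∈ {1, 2, 3, 4, 6} and set f = gcd(ℓ − 1, e). Let D^f be the subgroup of GL₂(ℤ/ℓℤ) consisting of the diagonal matrices diag(a^f, 1) with a ∈ (ℤ/ℓℤ)^×. Then there is no g ∈ GL₂(ℤ/ℓℤ) such that g·D^f·g⁻¹ is contained in the normalizer C_ns⁺(ℓ) of the nonsplit Cartan subgroup C_ns(ℓ). -/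
open Matrix

/-- The `f`-th power `D^f` of the semi-Cartan subgroup of `GL₂(ℤ/ℓℤ)`, as a set:
all diagonal matrices `diag(a^f, 1)` with `a ∈ (ℤ/ℓℤ)ˣ`. -/
def semiCartanPow (ℓ f : ℕ) : Set (GL (Fin 2) (ZMod ℓ)) :=
  {d | ∃ a : (ZMod ℓ)ˣ,
    (d : Matrix (Fin 2) (Fin 2) (ZMod ℓ)) = !![(a : ZMod ℓ) ^ f, 0; 0, 1]}

theorem stmt_10 (ℓ : ℕ) [Fact ℓ.Prime] (hℓ : 13 < ℓ) (ε : ZMod ℓ)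
    (hsq : ¬ IsSquare ε) (hε : ε ≠ 0)
    (e : ℕ) (he : e ∈ ({1, 2, 3, 4, 6} : Set ℕ)) (f : ℕ) (hf : f = Nat.gcd (ℓ - 1) e)
    (Hc : Subgroup (GL (Fin 2) (ZMod ℓ)))
    (hHc : (Hc : Set (GL (Fin 2) (ZMod ℓ))) = Cns ℓ ε) :
    ¬ ∃ g : GL (Fin 2) (ZMod ℓ),
      ∀ d ∈ semiCartanPow ℓ f, g * d * g⁻¹ ∈ Subgroup.normalizer (Hc : Set (GL (Fin 2) (ZMod ℓ))) := by
  rintro ⟨g, hg⟩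
  have hf12 : f ≤ 6 ∧ 0 < f := by
    have hpos : 0 < e ∧ e ≤ 6 := by
      simp only [Set.mem_insert_iff, Set.mem_singleton_iff] at he
      omega
    subst hf
    exact ⟨(Nat.gcd_le_right _ hpos.1).trans hpos.2, Nat.gcd_pos_of_pos_right _ hpos.1⟩
  obtain ⟨u, hu⟩ : ∃ u : (ZMod ℓ)ˣ, u ^ (2 * f) ≠ 1 := by
    obtain ⟨u, hu⟩ := IsCyclic.exists_generator (α := (ZMod ℓ)ˣ)
    refine ⟨u, fun h => ?_⟩
    have h1 := orderOf_dvd_of_pow_eq_one h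
    rw [orderOf_eq_card_of_forall_mem_zpowers hu, Nat.card_eq_fintype_card,
      ZMod.card_units] at h1
    have := Nat.le_of_dvd (by omega) h1
    omega
  set x : ZMod ℓ := (u : ZMod ℓ) ^ f with hx
  have hx2 : x ^ 2 ≠ 1 := by
    intro h
    apply hu
    ext
    rw [Units.val_pow_eq_pow_val, mul_comm, pow_mul]
    simpa [hx] using h
  have hx0 : x ≠ 0 := pow_ne_zero _ u.ne_zero
  have h2 : (2 : ZMod ℓ) ≠ 0 := by
    intro h
    have h' : ((2 : ℕ) : ZMod ℓ) = 0 := by exact_mod_cast h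
    rw [ZMod.natCast_eq_zero_iff] at h'
    have := Nat.le_of_dvd (by omega) h'
    omega
  let d : GL (Fin 2) (ZMod ℓ) := GeneralLinearGroup.mkOfDetNeZero !![x, 0; 0, 1]
    (by simpa [Matrix.det_fin_two] using hx0)
  let J : GL (Fin 2) (ZMod ℓ) := GeneralLinearGroup.mkOfDetNeZero !![0, ε; 1, 0]
    (by simpa [Matrix.det_fin_two] using hε)
  have hdv : (d : Matrix (Fin 2) (Fin 2) (ZMod ℓ)) = !![x, 0; 0, 1] := rfl
  have hJv : (J : Matrix (Fin 2) (Fin 2) (ZMod ℓ)) = !![0, ε; 1, 0] := rfl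
  have hn := hg d ⟨u, hdv⟩
  have hJ : J ∈ Hc := by
    rw [← SetLike.mem_coe, hHc]
    exact ⟨0, 1, by simp, by simp [hJv]⟩
  obtain ⟨h, hh⟩ : ∃ h, h = g * d * g⁻¹ := ⟨_, rfl⟩
  rw [← hh] at hn
  have hK : h * J * h⁻¹ ∈ Cns ℓ ε := by
    rw [← hHc]
    exact (Subgroup.mem_normalizer_iff.mp hn J).mp hJ
  obtain ⟨a, b, -, hab⟩ := hK
  obtain ⟨K, hKe⟩ : ∃ K, K = h * J * h⁻¹ := ⟨_, rfl⟩
  rw [← hKe] at hab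
  have hKh : K * h = h * J := by rw [hKe]; group
  have hKK : K * K = h * (J * J) * h⁻¹ := by rw [hKe]; group
  have hJJ : ((J * J : GL (Fin 2) (ZMod ℓ)) : Matrix (Fin 2) (Fin 2) (ZMod ℓ))
      = ε • (1 : Matrix (Fin 2) (Fin 2) (ZMod ℓ)) := by
    rw [Units.val_mul, hJv]
    ext i j
    fin_cases i <;> fin_cases j <;> simp [Matrix.mul_apply]
  have hKKm : (K : Matrix (Fin 2) (Fin 2) (ZMod ℓ)) * K
      = ε • (1 : Matrix (Fin 2) (Fin 2) (ZMod ℓ)) := by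
    rw [← Units.val_mul, hKK, Units.val_mul, Units.val_mul, hJJ]
    simp
  have htr : (h : Matrix (Fin 2) (Fin 2) (ZMod ℓ)).trace = x + 1 := by
    rw [hh, Units.val_mul, Units.val_mul, Matrix.trace_mul_comm, ← mul_assoc,
      ← Units.val_mul, inv_mul_cancel, Units.val_one, one_mul, hdv]
    simp [Matrix.trace_fin_two]
  have hdet : (h : Matrix (Fin 2) (Fin 2) (ZMod ℓ)).det = x := by
    rw [hh, Units.val_mul, Units.val_mul, Matrix.det_mul_comm, ← mul_assoc,
      ← Units.val_mul, inv_mul_cancel, Units.val_one, one_mul, hdv]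
    simp [Matrix.det_fin_two]
  have hm := congrArg (Units.val) hKh
  rw [Units.val_mul, Units.val_mul, hab, hJv] at hm
  rw [hab] at hKKm
  rw [Matrix.trace_fin_two] at htr
  rw [Matrix.det_fin_two] at hdet
  have k00 := congrFun (congrFun hKKm 0) 0
  have k10 := congrFun (congrFun hKKm 1) 0
  have m00 := congrFun (congrFun hm 0) 0
  have m10 := congrFun (congrFun hm 1) 0
  simp [Matrix.mul_apply, Fin.sum_univ_two] at k00 k10 m00 m10
  generalize (h : Matrix (Fin 2) (Fin 2) (ZMod ℓ)) 0 0 = p at *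
  generalize (h : Matrix (Fin 2) (Fin 2) (ZMod ℓ)) 0 1 = q at *
  generalize (h : Matrix (Fin 2) (Fin 2) (ZMod ℓ)) 1 0 = r at *
  generalize (h : Matrix (Fin 2) (Fin 2) (ZMod ℓ)) 1 1 = s at *
  have hab0 : a * b = 0 := by
    apply (mul_eq_zero.mp (show 2 * (a * b) = 0 by linear_combination k10)).resolve_left h2
  rcases mul_eq_zero.mp hab0 with ha | hb
  · subst ha
    have hb2 : (b - 1) * (b + 1) = 0 := by
      apply (mul_eq_zero.mp (show ε * ((b - 1) * (b + 1)) = 0 by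
        linear_combination k00)).resolve_left hε
    rcases mul_eq_zero.mp hb2 with hb | hb
    · have hb : b = 1 := by linear_combination hb
      subst hb
      have hs : s = p := by linear_combination -m10
      have hq : q = ε * r := by linear_combination -m00
      subst hs hq
      have key : (x - 1) ^ 2 = ε * (2 * r) ^ 2 := by
        linear_combination (-(x + 1) - 2 * s) * htr + 4 * hdet
      by_cases hr : r = 0
      · subst hr
        have : x - 1 = 0 := by
          apply pow_eq_zero_iff (two_ne_zero) |>.mp
          linear_combination key
        apply hx2
        linear_combination (x + 1) * this
      · apply hsq
        refine ⟨(x - 1) / (2 * r), ?_⟩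
        field_simp
        linear_combination -key
    · have hb : b = -1 := by linear_combination hb
      subst hb
      apply hx2
      have : x + 1 = 0 := by linear_combination -htr - m10
      linear_combination (x - 1) * this
  · subst hb
    exact hsq ⟨a, by linear_combination -k00⟩
end
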